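/- There exist constants γ₀ > 0 and ε₁ > 0, depending only on C₀, n and d, such that the following holds for every fixed α > γ₀. For a cube Q write δ(Q, ℝ^d) := ∫_{ℝ^d ∖ Q} |x−z_Q|^{-n} dμ(x). If R₀ is a cube centered at a point of supp(μ) with δ(R₀, ℝ^d) > α, then there exists a (2,2^{d+1})-doubling cube S ⊃ R₀ concentric with R₀, with ℓ(S) ≥ 2 ℓ(R₀), satisfying |δ(R₀, S) − α| ≤ ε₁; here ε₁ does not depend on α. -/

import Mathlib

open MeasureTheory Metric Set Filter
open scoped ENNReal NNReal

noncomputable section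

/-- The ambient Euclidean space `ℝ^d`. -/
abbrev Euc (d : ℕ) := EuclideanSpace ℝ (Fin d)

/-- A closed axis-parallel cube in `ℝ^d`, given by its center and side length. -/
structure Cube (d : ℕ) where
  center : Euc d
  side : ℝ

namespace Cube

variable {d : ℕ}

/-- The set of points of the cube. -/
def toSet (Q : Cube d) : Set (Euc d) := {x | ∀ i, |x i - Q.center i| ≤ Q.side / 2}

/-- The concentric dilation `ρQ`. -/
def dilate (Q : Cube d) (ρ : ℝ) : Cube d := ⟨Q.center, ρ * Q.side⟩

/-- `Q.encl R` is the smallest cube concentric with `Q` containing `Q ∪ R`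
(denoted `Q_R` in the paper). -/
def encl (Q R : Cube d) : Cube d :=
  ⟨Q.center, max Q.side (⨆ i, 2 * |R.center i - Q.center i| + R.side)⟩

end Cube

variable {d : ℕ}

/-- The support of a measure: the points all of whose neighbourhoods have positive
measure. -/
def msupport (μ : Measure (Euc d)) : Set (Euc d) := {x | ∀ r > 0, 0 < μ (ball x r)}

/-- A cube of the lattice: positive side length and centered at a point of `supp μ`. -/
def IsCube (μ : Measure (Euc d)) (Q : Cube d) : Prop :=
  Q.center ∈ msupport μ ∧ 0 < Q.side

/-- The growth condition `μ(B(x,r)) ≤ C₀ rⁿ` for all `x ∈ supp μ`, `r > 0`. -/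
def GrowthCond (μ : Measure (Euc d)) (C₀ n : ℝ) : Prop :=
  ∀ x ∈ msupport μ, ∀ r : ℝ, 0 < r → μ (ball x r) ≤ ENNReal.ofReal (C₀ * r ^ n)

/-- The coefficient `δ(Q,R)`. -/
def cdelta (μ : Measure (Euc d)) (n : ℝ) (Q R : Cube d) : ℝ :=
  max (∫ x in (Q.encl R).toSet \ Q.toSet, ‖x - Q.center‖ ^ (-n) ∂μ)
      (∫ x in (R.encl Q).toSet \ R.toSet, ‖x - R.center‖ ^ (-n) ∂μ)

/-- An `(α,β)`-doubling cube: `μ(αQ) ≤ β μ(Q)`. -/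
def IsDoublingWith (μ : Measure (Euc d)) (α β : ℝ) (Q : Cube d) : Prop :=
  μ (Q.dilate α).toSet ≤ ENNReal.ofReal β * μ Q.toSet

/-- A `(2,2^(d+1))`-doubling cube. -/
def IsDoubling (μ : Measure (Euc d)) (Q : Cube d) : Prop :=
  μ (Q.dilate 2).toSet ≤ 2 ^ (d + 1) * μ Q.toSet

/-- An `n`-dimensional Calderón–Zygmund kernel with size constant `C₁`,
regularity constant `C₂` and regularity exponent `δ`. -/
structure IsCZKernel (d : ℕ) (n C₁ C₂ δ : ℝ) (k : Euc d → Euc d → ℝ) : Prop where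
  measurable : Measurable (Function.uncurry k)
  size : ∀ x y, x ≠ y → |k x y| ≤ C₁ / ‖x - y‖ ^ n
  reg : ∀ x x' y : Euc d, ‖x - x'‖ ≤ ‖x - y‖ / 2 →
    |k x y - k x' y| + |k y x - k y x'| ≤ C₂ * ‖x - x'‖ ^ δ / ‖x - y‖ ^ (n + δ)

/-- The truncated operator `T_ε`. -/
def trunc (μ : Measure (Euc d)) (k : Euc d → Euc d → ℝ) (ε : ℝ) (f : Euc d → ℝ)
    (x : Euc d) : ℝ :=
  ∫ y in {y | ε < dist x y}, k x y * f y ∂μ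

/-- `T_ε χ_Q`, the truncated operator applied to the characteristic function of a
cube `Q`. -/
def truncCube (μ : Measure (Euc d)) (k : Euc d → Euc d → ℝ) (ε : ℝ) (Q : Cube d)
    (x : Euc d) : ℝ :=
  ∫ y in {y | ε < dist x y} ∩ Q.toSet, k x y ∂μ

/-- The function representing `T_ε(1)` modulo additive constants, relative to a
base point `x₀`. -/
def truncOne (μ : Measure (Euc d)) (k : Euc d → Euc d → ℝ) (x₀ : Euc d) (ε : ℝ)
    (x : Euc d) : ℝ :=
  ∫ y, ({y | ε < dist x y}.indicator (fun z => k x z) y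
      - {y | ε < dist x₀ y}.indicator (fun z => k x₀ z) y) ∂μ

/-- `f ∈ BMO_ρ(μ)` with constant `C`. -/
def BMOWith (μ : Measure (Euc d)) (ρ C : ℝ) (f : Euc d → ℝ) : Prop :=
  ∀ Q : Cube d, IsCube μ Q →
    ∫ x in Q.toSet, |f x - ⨍ y in Q.toSet, f y ∂μ| ∂μ ≤ C * (μ (Q.dilate ρ).toSet).toReal

/-- `f ∈ RBMO(μ)` with constant `C`. -/
def RBMOWith (μ : Measure (Euc d)) (n C : ℝ) (f : Euc d → ℝ) : Prop :=
  (∀ Q : Cube d, IsCube μ Q → IsDoubling μ Q →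
    ∫ x in Q.toSet, |f x - ⨍ y in Q.toSet, f y ∂μ| ∂μ ≤ C * (μ Q.toSet).toReal) ∧
  (∀ Q R : Cube d, IsCube μ Q → IsCube μ R → IsDoubling μ Q → IsDoubling μ R →
    Q.toSet ⊆ R.toSet →
    |(⨍ x in Q.toSet, f x ∂μ) - ⨍ x in R.toSet, f x ∂μ| ≤ C * (1 + cdelta μ n Q R))

/-- The distance between two sets. -/
def setDist (s t : Set (Euc d)) : ℝ := sInf (Set.image2 dist s t)

/-- `δ(x, R)` for a point `x`, defined through the smallest cube centered at `x`
containing `R`; with values in `[0,∞]`. -/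
def deltaPt (μ : Measure (Euc d)) (n : ℝ) (x : Euc d) (R : Cube d) : ℝ≥0∞ :=
  ∫⁻ y in ((Cube.mk x 0).encl R).toSet \ {x}, ENNReal.ofReal (‖y - x‖ ^ (-n)) ∂μ

/-- `δ(Q, ℝ^d)`, with values in `[0,∞]`. -/
def deltaFull (μ : Measure (Euc d)) (n : ℝ) (Q : Cube d) : ℝ≥0∞ :=
  ∫⁻ x in Q.toSetᶜ, ENNReal.ofReal (‖x - Q.center‖ ^ (-n)) ∂μ

/-- The integral operator with kernel `s`. -/
def Sop (μ : Measure (Euc d)) (s : Euc d → Euc d → ℝ) (f : Euc d → ℝ) (x : Euc d) : ℝ :=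
  ∫ y, s x y * f y ∂μ

/-- The difference operators `D_k = S_k - S_{k-1}`. -/
def Dop (μ : Measure (Euc d)) (s : ℤ → Euc d → Euc d → ℝ) (j : ℤ) (f : Euc d → ℝ) :
    Euc d → ℝ :=
  fun x => Sop μ (s j) f x - Sop μ (s (j - 1)) f x

theorem aux_seq (F b : ℕ → ℝ) (P : ℕ → Prop) (K α : ℝ) (hF0 : F 0 = 0)
    (hF : ∀ j, F (j + 1) ≤ F j + b j) (hb : ∀ j, 0 ≤ b j) (hbK : ∀ j, b j ≤ K)
    (hP : ∀ j, ¬ P (j + 1) → 2 * b j ≤ b (j + 1)) (hα : 2 * K < α) (hJ : ∃ J, α < F J) :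
    ∃ j, 1 ≤ j ∧ P j ∧ |F j - α| ≤ 2 * K := by
  classical
  have key : ∀ k, (∃ j, 1 ≤ j ∧ j ≤ k ∧ P j ∧ F (k + 1) ≤ F j + 2 * b k) ∨
      F (k + 1) ≤ 2 * b k := by
    intro k
    induction k with
    | zero => right; have := hF 0; have := hb 0; linarith
    | succ k ih =>
      have h1 := hF (k + 1)
      have h2 := hb (k + 1)
      by_cases hp : P (k + 1)
      · left; exact ⟨k + 1, by omega, le_rfl, hp, by linarith⟩
      · have h3 := hP k hp
        rcases ih with ⟨j, hj, hjk, hpj, h⟩ | h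
        · left; exact ⟨j, hj, by omega, hpj, by linarith⟩
        · right; linarith
  have hmin := fun m => Nat.find_min hJ (m := m)
  have hsp := Nat.find_spec hJ
  set J := Nat.find hJ
  have hK : 0 ≤ K := (hb 0).trans (hbK 0)
  have hJ0 : J ≠ 0 := by
    intro h; rw [h, hF0] at hsp; linarith
  obtain ⟨k, hk⟩ := Nat.exists_eq_succ_of_ne_zero hJ0
  rw [hk] at hsp
  have hbk := hbK k
  rcases key k with ⟨j, hj, hjk, hpj, h⟩ | h
  · have := hmin j (by omega)
    refine ⟨j, hj, hpj, ?_⟩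
    simp only [Nat.succ_eq_add_one] at hsp
    rw [abs_le]; constructor <;> linarith
  · simp only [Nat.succ_eq_add_one] at hsp
    linarith

theorem aux_meas {d : ℕ} (Q : Cube d) : MeasurableSet Q.toSet := by
  have : Q.toSet = ⋂ i, {x : Euc d | |x i - Q.center i| ≤ Q.side / 2} := by
    ext x; simp [Cube.toSet]
  rw [this]
  refine MeasurableSet.iInter fun i => ?_
  apply IsClosed.measurableSet
  apply isClosed_le <;> fun_prop

theorem aux_norm_lower {d : ℕ} (Q : Cube d) (x : Euc d) (hx : x ∉ Q.toSet) :
    Q.side / 2 ≤ ‖x - Q.center‖ := by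
  simp only [Cube.toSet, mem_ofPred_eq, not_forall, not_le] at hx
  obtain ⟨i, hi⟩ := hx
  have := PiLp.norm_apply_le (x - Q.center) i
  simp only [PiLp.sub_apply, Real.norm_eq_abs] at this
  linarith

theorem aux_subset_ball {d : ℕ} (hd : 0 < d) (c : Euc d) (s : ℝ) (hs : 0 < s) :
    (Cube.mk c s).toSet ⊆ ball c (d * s) := by
  intro x hx
  simp only [Cube.toSet, mem_ofPred_eq] at hx
  rw [mem_ball, dist_eq_norm]
  have hd' : (1 : ℝ) ≤ d := by exact_mod_cast hd
  have h1 : ‖x - c‖ ^ 2 ≤ d * (s / 2) ^ 2 := by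
    rw [EuclideanSpace.norm_sq_eq]
    calc ∑ i, ‖(x - c) i‖ ^ 2 ≤ ∑ _i : Fin d, (s / 2) ^ 2 := by
          apply Finset.sum_le_sum
          intro i _
          have := hx i
          simp only [PiLp.sub_apply, Real.norm_eq_abs]
          gcongr
      _ = d * (s / 2) ^ 2 := by simp
  apply lt_of_pow_lt_pow_left₀ 2 (by positivity)
  have : 0 < s ^ 2 := by positivity
  nlinarith

theorem aux_mono {d : ℕ} (c : Euc d) {s t : ℝ} (h : s ≤ t) :
    (Cube.mk c s).toSet ⊆ (Cube.mk c t).toSet := by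
  intro x hx i
  have := hx i
  dsimp only at this ⊢
  linarith

theorem aux_cdelta {d : ℕ} (hd : 0 < d) (μ : Measure (Euc d)) (n : ℝ) (c : Euc d) {s t : ℝ}
    (h : s ≤ t) : cdelta μ n ⟨c, s⟩ ⟨c, t⟩ =
      (∫⁻ x in (Cube.mk c t).toSet \ (Cube.mk c s).toSet,
        ENNReal.ofReal (‖x - c‖ ^ (-n)) ∂μ).toReal := by
  haveI : Nonempty (Fin d) := ⟨⟨0, hd⟩⟩
  have h1 : (Cube.mk c s).encl ⟨c, t⟩ = ⟨c, t⟩ := by simp [Cube.encl, h]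
  have h2 : (Cube.mk c t).encl ⟨c, s⟩ = ⟨c, t⟩ := by simp [Cube.encl, h]
  unfold cdelta
  rw [h1, h2]
  simp only [sdiff_self, Measure.restrict_empty, integral_zero_measure]
  rw [max_eq_left]
  · rw [integral_eq_lintegral_of_nonneg_ae]
    · exact Filter.Eventually.of_forall fun x => by positivity
    · exact (by fun_prop : Measurable fun x : Euc d => ‖x - c‖ ^ (-n)).aestronglyMeasurable
  · exact integral_nonneg fun x => by positivity

/-- Precise existence of big doubling cubes: if `δ(R₀, ℝ^d) > α > γ₀`, there is a
doubling cube `S ⊃ R₀` concentric with `R₀`, with `ℓ(S) ≥ 2ℓ(R₀)`, such that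
`|δ(R₀,S) − α| ≤ ε₁`, where `ε₁` does not depend on `α`. -/
theorem exists_big_doubling_cube_prescribed_delta {d : ℕ} (n C₀ : ℝ)
    (hn : 0 < n) (hnd : n ≤ d) :
    ∃ γ₀ ε₁ : ℝ, 0 < γ₀ ∧ 0 < ε₁ ∧
      ∀ (μ : Measure (Euc d)) [IsLocallyFiniteMeasure μ], GrowthCond μ C₀ n →
      ∀ α : ℝ, γ₀ < α →
      ∀ R₀ : Cube d, IsCube μ R₀ →
        ENNReal.ofReal α < deltaFull μ n R₀ →
        ∃ S : Cube d, S.center = R₀.center ∧ R₀.toSet ⊆ S.toSet ∧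
          2 * R₀.side ≤ S.side ∧ IsDoubling μ S ∧ |cdelta μ n R₀ S - α| ≤ ε₁ := by
  have hd : 0 < d := by
    have : (0 : ℝ) < d := hn.trans_le hnd
    exact_mod_cast this
  set K : ℝ := |C₀| * (4 * d) ^ n with hK
  have hK0 : 0 ≤ K := by positivity
  refine ⟨2 * K + 1, 2 * K + 1, by positivity, by positivity, ?_⟩
  intro μ _ hμ α hα R₀ hR hδ
  obtain ⟨c, s⟩ := R₀
  obtain ⟨hc, hs⟩ := hR
  dsimp only at hc hs
  set Q : ℕ → Cube d := fun j => ⟨c, 2 ^ j * s⟩ with hQ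
  set g : Euc d → ℝ≥0∞ := fun x => ENNReal.ofReal (‖x - c‖ ^ (-n)) with hg
  set L : ℕ → ℝ≥0∞ := fun j => ∫⁻ x in (Q j).toSet \ (Cube.mk c s).toSet, g x ∂μ with hL
  set w : ℕ → ℝ := fun j => (2 ^ j * s / 2) ^ (-n) with hw
  have hw0 : ∀ j, 0 ≤ w j := fun j => by positivity
  have hside : ∀ j, s ≤ 2 ^ j * s := fun j => by
    have : (1 : ℝ) ≤ 2 ^ j := one_le_pow₀ (by norm_num)
    nlinarith
  have hQmono : Monotone fun j => (Q j).toSet := by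
    apply monotone_nat_of_le_succ
    intro j
    apply aux_mono
    rw [pow_succ]
    have : 0 < 2 ^ j * s := by positivity
    linarith
  have hm : ∀ j, μ (Q j).toSet ≤ ENNReal.ofReal (|C₀| * (d * (2 ^ j * s)) ^ n) := by
    intro j
    have hp : 0 < 2 ^ j * s := by positivity
    refine (measure_mono (aux_subset_ball hd c _ hp)).trans ?_
    refine (hμ c hc _ (by positivity)).trans ?_
    apply ENNReal.ofReal_le_ofReal
    gcongr
    exact le_abs_self _
  have hmt : ∀ j, μ (Q j).toSet ≠ ⊤ := fun j => ((hm j).trans_lt ENNReal.ofReal_lt_top).ne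
  have hstep : ∀ j, L (j + 1) ≤ L j + ENNReal.ofReal (w j) * μ (Q (j + 1)).toSet := by
    intro j
    have hsub : (Q (j + 1)).toSet \ (Cube.mk c s).toSet ⊆
        ((Q j).toSet \ (Cube.mk c s).toSet) ∪ ((Q (j + 1)).toSet \ (Q j).toSet) := by
      rintro x ⟨h1, h2⟩
      by_cases h : x ∈ (Q j).toSet
      · exact Or.inl ⟨h, h2⟩
      · exact Or.inr ⟨h1, h⟩
    refine (lintegral_mono_set hsub).trans ?_
    refine (lintegral_union_le _ _ _).trans ?_
    refine add_le_add le_rfl ?_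
    calc ∫⁻ x in (Q (j + 1)).toSet \ (Q j).toSet, g x ∂μ
        ≤ ∫⁻ x in (Q (j + 1)).toSet \ (Q j).toSet, ENNReal.ofReal (w j) ∂μ := by
          apply setLIntegral_mono' ((aux_meas _).diff (aux_meas _))
          rintro x ⟨_, h2⟩
          apply ENNReal.ofReal_le_ofReal
          have hp : 0 < 2 ^ j * s / 2 := by positivity
          exact Real.rpow_le_rpow_of_nonpos hp (aux_norm_lower (Q j) x h2) (by linarith)
      _ ≤ _ := by
          rw [setLIntegral_const]
          gcongr
          exact sdiff_subset
  have hL0 : L 0 = 0 := by simp [hL, hQ]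
  have hLt : ∀ j, L j ≠ ⊤ := by
    intro j
    induction j with
    | zero => simp [hL0]
    | succ j ih =>
      exact ne_top_of_le_ne_top (ENNReal.add_ne_top.2
        ⟨ih, ENNReal.mul_ne_top ENNReal.ofReal_ne_top (hmt _)⟩) (hstep j)
  have hsup : deltaFull μ n ⟨c, s⟩ = ⨆ j, L j := by
    have hU : (Cube.mk c s).toSetᶜ = ⋃ j, ((Q j).toSet \ (Cube.mk c s).toSet) := by
      ext x
      simp only [mem_compl_iff, mem_iUnion, Set.mem_sdiff, exists_and_right, iff_and_self]
      intro _
      obtain ⟨j, hj⟩ := pow_unbounded_of_one_lt (2 * ‖x - c‖ / s) (one_lt_two (α := ℝ))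
      refine ⟨j, fun i => ?_⟩
      have := PiLp.norm_apply_le (x - c) i
      simp only [PiLp.sub_apply, Real.norm_eq_abs] at this
      rw [div_lt_iff₀ hs] at hj
      dsimp only [hQ]
      linarith
    unfold deltaFull
    rw [hU, setLIntegral_iUnion_of_directed]
    apply Monotone.directed_le
    intro i j hij
    exact sdiff_subset_sdiff_left (hQmono hij)
  have hαp : 0 ≤ α := by linarith
  obtain ⟨j, hj1, hjP, hjα⟩ := aux_seq (fun j => (L j).toReal)
    (fun j => w j * (μ (Q (j + 1)).toSet).toReal) (fun j => IsDoubling μ (Q j)) K α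
    (by simp [hL0])
    (by
      intro j
      have h := ENNReal.toReal_mono (ENNReal.add_ne_top.2
        ⟨hLt j, ENNReal.mul_ne_top ENNReal.ofReal_ne_top (hmt _)⟩) (hstep j)
      rwa [ENNReal.toReal_add (hLt j) (ENNReal.mul_ne_top ENNReal.ofReal_ne_top (hmt _)),
        ENNReal.toReal_mul, ENNReal.toReal_ofReal (hw0 j)] at h)
    (fun j => mul_nonneg (hw0 j) ENNReal.toReal_nonneg)
    (by
      intro j
      have h1 : (μ (Q (j + 1)).toSet).toReal ≤ |C₀| * (d * (2 ^ (j + 1) * s)) ^ n :=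
        ENNReal.toReal_le_of_le_ofReal (by positivity) (hm _)
      have h2 : w j * (|C₀| * (d * (2 ^ (j + 1) * s)) ^ n) = K := by
        have hp : 0 < 2 ^ j * s / 2 := by positivity
        have e : (d : ℝ) * (2 ^ (j + 1) * s) = (4 * d) * (2 ^ j * s / 2) := by ring
        rw [e, Real.mul_rpow (by positivity) hp.le, hK, hw]
        dsimp only
        rw [Real.rpow_neg hp.le]
        have : (2 ^ j * s / 2) ^ n ≠ 0 := (Real.rpow_pos_of_pos hp n).ne'
        field_simp
      rw [← h2]
      exact mul_le_mul_of_nonneg_left h1 (hw0 j))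
    (by
      intro j hP
      have e : (Q (j + 1)).dilate 2 = Q (j + 1 + 1) := by
        simp only [hQ, Cube.dilate, Cube.mk.injEq, true_and]; ring
      simp only [IsDoubling, e, not_le] at hP
      have h1 := ENNReal.toReal_mono (hmt _) hP.le
      rw [ENNReal.toReal_mul] at h1
      simp only [ENNReal.toReal_pow, ENNReal.toReal_ofNat] at h1
      have hwj : w j ≤ 2 ^ d * w (j + 1) := by
        have hp : 0 < 2 ^ j * s / 2 := by positivity
        have e2 : w (j + 1) = 2 ^ (-n) * w j := by
          simp only [hw]
          rw [← Real.mul_rpow (by norm_num) hp.le]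
          congr 1; ring
        rw [e2, ← mul_assoc, ← Real.rpow_natCast, ← Real.rpow_add (by norm_num)]
        apply le_mul_of_one_le_left (hw0 j)
        exact Real.one_le_rpow (by norm_num) (by linarith)
      have h3 : (0 : ℝ) ≤ (μ (Q (j + 1)).toSet).toReal := ENNReal.toReal_nonneg
      calc 2 * (w j * (μ (Q (j + 1)).toSet).toReal)
          ≤ 2 * ((2 ^ d * w (j + 1)) * (μ (Q (j + 1)).toSet).toReal) := by gcongr
        _ = w (j + 1) * (2 ^ (d + 1) * (μ (Q (j + 1)).toSet).toReal) := by ring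
        _ ≤ _ := mul_le_mul_of_nonneg_left h1 (hw0 _))
    (by linarith)
    (by
      rw [hsup, lt_iSup_iff] at hδ
      obtain ⟨J, hJ⟩ := hδ
      exact ⟨J, (ENNReal.ofReal_lt_iff_lt_toReal hαp (hLt J)).1 hJ⟩)
  refine ⟨Q j, rfl, aux_mono c (hside j), ?_, hjP, ?_⟩
  · have : (2 : ℝ) ^ 1 ≤ 2 ^ j := pow_le_pow_right₀ (by norm_num) hj1
    dsimp only [hQ]
    nlinarith
  · rw [aux_cdelta hd μ n c (hside j)]
    exact hjα.trans (by linarith)
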